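/- If an interpretation J (over a domain D) is not maximally diverse for a PEUF p-formula F, then there is an interpretation J' (over the domain D extended by one fresh element) that is a proper refinement of J for the term set T(F) and satisfies: if J'[F] is true then J[F] is true. -/

import Mathlib

/-!
If `f(a)` violates diversity under `J`, give it a fresh value `none` of its own, and let every
symbol read `none` as the old value `J(f)(a)` whenever it occurs as an argument. Collapsing `none`
back to that value is then a homomorphism onto `J`, so equalities between p-terms can only be lost.
As `f` is a p-symbol, g-terms never take the value `none`, so g-formulas keep their truth value;
p-formulas are monotone in equations between p-terms, hence true ones were already true under `J`.
-/

mutual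
inductive EufTerm (Fn Pr : Type) : Type
  | app : Fn → List (EufTerm Fn Pr) → EufTerm Fn Pr
  | ite : EufFormula Fn Pr → EufTerm Fn Pr → EufTerm Fn Pr → EufTerm Fn Pr
inductive EufFormula (Fn Pr : Type) : Type
  | tt : EufFormula Fn Pr
  | ff : EufFormula Fn Pr
  | not : EufFormula Fn Pr → EufFormula Fn Pr
  | and : EufFormula Fn Pr → EufFormula Fn Pr → EufFormula Fn Pr
  | or : EufFormula Fn Pr → EufFormula Fn Pr → EufFormula Fn Pr
  | eq : EufTerm Fn Pr → EufTerm Fn Pr → EufFormula Fn Pr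
  | papp : Pr → List (EufTerm Fn Pr) → EufFormula Fn Pr
end

structure Interp (Fn Pr : Type) (D : Type u) where
  fn : Fn → List D → D
  pr : Pr → List D → Bool

open Classical in
mutual
noncomputable def evalT {Fn Pr : Type} {D : Type} (I : Interp Fn Pr D) : EufTerm Fn Pr → D
  | .app f args => I.fn f (args.attach.map (fun t => evalT I t.1))
  | .ite G T1 T2 => if evalF I G then evalT I T1 else evalT I T2
termination_by t => sizeOf t
decreasing_by
  all_goals simp_wf
  all_goals try omega
  all_goals (have := List.sizeOf_lt_of_mem t.2; omega)
noncomputable def evalF {Fn Pr : Type} {D : Type} (I : Interp Fn Pr D) : EufFormula Fn Pr → Bool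
  | .tt => true
  | .ff => false
  | .not G => !evalF I G
  | .and G1 G2 => evalF I G1 && evalF I G2
  | .or G1 G2 => evalF I G1 || evalF I G2
  | .eq T1 T2 => decide (evalT I T1 = evalT I T2)
  | .papp p args => I.pr p (args.attach.map (fun t => evalT I t.1))
termination_by g => sizeOf g
decreasing_by
  all_goals simp_wf
  all_goals try omega
  all_goals (have := List.sizeOf_lt_of_mem t.2; omega)
end
def ValidOn {Fn Pr : Type} (F : EufFormula Fn Pr) (D : Type) : Prop :=
  ∀ I : Interp Fn Pr D, evalF I F = true

def UniversallyValid {Fn Pr : Type} (F : EufFormula Fn Pr) : Prop :=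
  ∀ D : Type, Nonempty D → ValidOn F D

/-- Expressions: terms or formulas. -/
inductive EufExpr (Fn Pr : Type) : Type
  | t : EufTerm Fn Pr → EufExpr Fn Pr
  | f : EufFormula Fn Pr → EufExpr Fn Pr

/-- Immediate (proper) subexpression relation. -/
inductive ImmSub {Fn Pr : Type} : EufExpr Fn Pr → EufExpr Fn Pr → Prop
  | appArg {g : Fn} {args : List (EufTerm Fn Pr)} {T : EufTerm Fn Pr} :
      T ∈ args → ImmSub (.t T) (.t (.app g args))
  | iteC {G : EufFormula Fn Pr} {T1 T2 : EufTerm Fn Pr} : ImmSub (.f G) (.t (.ite G T1 T2))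
  | ite1 {G : EufFormula Fn Pr} {T1 T2 : EufTerm Fn Pr} : ImmSub (.t T1) (.t (.ite G T1 T2))
  | ite2 {G : EufFormula Fn Pr} {T1 T2 : EufTerm Fn Pr} : ImmSub (.t T2) (.t (.ite G T1 T2))
  | not {G : EufFormula Fn Pr} : ImmSub (.f G) (.f (.not G))
  | andL {G1 G2 : EufFormula Fn Pr} : ImmSub (.f G1) (.f (.and G1 G2))
  | andR {G1 G2 : EufFormula Fn Pr} : ImmSub (.f G2) (.f (.and G1 G2))
  | orL {G1 G2 : EufFormula Fn Pr} : ImmSub (.f G1) (.f (.or G1 G2))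
  | orR {G1 G2 : EufFormula Fn Pr} : ImmSub (.f G2) (.f (.or G1 G2))
  | eqL {T1 T2 : EufTerm Fn Pr} : ImmSub (.t T1) (.f (.eq T1 T2))
  | eqR {T1 T2 : EufTerm Fn Pr} : ImmSub (.t T2) (.f (.eq T1 T2))
  | pappArg {p : Pr} {args : List (EufTerm Fn Pr)} {T : EufTerm Fn Pr} :
      T ∈ args → ImmSub (.t T) (.f (.papp p args))

/-- `SubExpr a b`: `a` occurs (as a subexpression) in `b`. -/
def SubExpr {Fn Pr : Type} (a b : EufExpr Fn Pr) : Prop := Relation.ReflTransGen ImmSub a b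

def TermInT {Fn Pr : Type} (T S : EufTerm Fn Pr) : Prop := SubExpr (.t T) (.t S)
def TermInF {Fn Pr : Type} (T : EufTerm Fn Pr) (F : EufFormula Fn Pr) : Prop :=
  SubExpr (.t T) (.f F)
def FormulaInT {Fn Pr : Type} (G : EufFormula Fn Pr) (S : EufTerm Fn Pr) : Prop :=
  SubExpr (.f G) (.t S)
def FormulaInF {Fn Pr : Type} (G F : EufFormula Fn Pr) : Prop := SubExpr (.f G) (.f F)

def IsAppTerm {Fn Pr : Type} : EufTerm Fn Pr → Prop
  | .app _ _ => True
  | _ => False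

/-- `𝒯(F)`: the function application terms occurring in `F`. -/
def AppTermsF {Fn Pr : Type} (F : EufFormula Fn Pr) : Set (EufTerm Fn Pr) :=
  {T | IsAppTerm T ∧ TermInF T F}

/-- A function symbol occurs in `F` when some application of it occurs in `F`. -/
def FnInF {Fn Pr : Type} (g : Fn) (F : EufFormula Fn Pr) : Prop :=
  ∃ args, TermInF (EufTerm.app g args) F

def PrInF {Fn Pr : Type} (p : Pr) (F : EufFormula Fn Pr) : Prop :=
  ∃ args, FormulaInF (EufFormula.papp p args) F

/-- `I` is diverse for `F` with respect to the set `Sg` of function symbols. -/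
def DiverseFor {Fn Pr D : Type} (I : Interp Fn Pr D) (F : EufFormula Fn Pr)
    (Sg : Set Fn) : Prop :=
  ∀ (g : Fn) (args : List (EufTerm Fn Pr)), g ∈ Sg →
    TermInF (EufTerm.app g args) F →
    ∀ T2 ∈ AppTermsF F, evalT I (EufTerm.app g args) = evalT I T2 →
      ∃ args2, T2 = EufTerm.app g args2 ∧
        List.Forall₂ (fun a b => evalT I a = evalT I b) args args2

mutual
/-- PEUF g-terms, where `isP` designates the p-function symbols. -/
inductive IsGTerm {Fn Pr : Type} (isP : Fn → Prop) : EufTerm Fn Pr → Prop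
  | ite {G : EufFormula Fn Pr} {T1 T2 : EufTerm Fn Pr} :
      IsGFormula isP G → IsGTerm isP T1 → IsGTerm isP T2 → IsGTerm isP (.ite G T1 T2)
  | app {g : Fn} {args : List (EufTerm Fn Pr)} :
      ¬ isP g → (∀ T ∈ args, IsPTerm isP T) → IsGTerm isP (.app g args)
/-- PEUF p-terms. -/
inductive IsPTerm {Fn Pr : Type} (isP : Fn → Prop) : EufTerm Fn Pr → Prop
  | g {T : EufTerm Fn Pr} : IsGTerm isP T → IsPTerm isP T
  | ite {G : EufFormula Fn Pr} {T1 T2 : EufTerm Fn Pr} :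
      IsGFormula isP G → IsPTerm isP T1 → IsPTerm isP T2 → IsPTerm isP (.ite G T1 T2)
  | app {g : Fn} {args : List (EufTerm Fn Pr)} :
      isP g → (∀ T ∈ args, IsPTerm isP T) → IsPTerm isP (.app g args)
/-- PEUF g-formulas. -/
inductive IsGFormula {Fn Pr : Type} (isP : Fn → Prop) : EufFormula Fn Pr → Prop
  | tt : IsGFormula isP .tt
  | ff : IsGFormula isP .ff
  | not {G : EufFormula Fn Pr} : IsGFormula isP G → IsGFormula isP (.not G)
  | and {G1 G2 : EufFormula Fn Pr} :
      IsGFormula isP G1 → IsGFormula isP G2 → IsGFormula isP (.and G1 G2)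
  | or {G1 G2 : EufFormula Fn Pr} :
      IsGFormula isP G1 → IsGFormula isP G2 → IsGFormula isP (.or G1 G2)
  | eq {T1 T2 : EufTerm Fn Pr} :
      IsGTerm isP T1 → IsGTerm isP T2 → IsGFormula isP (.eq T1 T2)
  | papp {p : Pr} {args : List (EufTerm Fn Pr)} :
      (∀ T ∈ args, IsPTerm isP T) → IsGFormula isP (.papp p args)
/-- PEUF p-formulas. -/
inductive IsPFormula {Fn Pr : Type} (isP : Fn → Prop) : EufFormula Fn Pr → Prop
  | g {G : EufFormula Fn Pr} : IsGFormula isP G → IsPFormula isP G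
  | and {G1 G2 : EufFormula Fn Pr} :
      IsPFormula isP G1 → IsPFormula isP G2 → IsPFormula isP (.and G1 G2)
  | or {G1 G2 : EufFormula Fn Pr} :
      IsPFormula isP G1 → IsPFormula isP G2 → IsPFormula isP (.or G1 G2)
  | eq {T1 T2 : EufTerm Fn Pr} :
      IsPTerm isP T1 → IsPTerm isP T2 → IsPFormula isP (.eq T1 T2)
end

/-- The p-function symbols occurring in `F`. -/
def PSymbolsIn {Fn Pr : Type} (isP : Fn → Prop) (F : EufFormula Fn Pr) : Set Fn :=
  {g | isP g ∧ FnInF g F}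

/-- `I` is maximally diverse for the p-formula `F`. -/
def MaxDiverse {Fn Pr D : Type} (isP : Fn → Prop) (I : Interp Fn Pr D)
    (F : EufFormula Fn Pr) : Prop :=
  DiverseFor I F (PSymbolsIn isP F)

/-- `I'` refines `I` on the term set `Ts`. -/
def RefinesOn {Fn Pr D D' : Type} (I' : Interp Fn Pr D') (I : Interp Fn Pr D)
    (Ts : Set (EufTerm Fn Pr)) : Prop :=
  ∀ T1 ∈ Ts, ∀ T2 ∈ Ts, evalT I' T1 = evalT I' T2 → evalT I T1 = evalT I T2

def ProperRefinesOn {Fn Pr D D' : Type} (I' : Interp Fn Pr D') (I : Interp Fn Pr D)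
    (Ts : Set (EufTerm Fn Pr)) : Prop :=
  RefinesOn I' I Ts ∧
    ∃ T1 ∈ Ts, ∃ T2 ∈ Ts, evalT I T1 = evalT I T2 ∧ evalT I' T1 ≠ evalT I' T2

section Evaluation

variable {Fn Pr D D' : Type}

theorem map_map_evalT {I' : Interp Fn Pr D'} {I : Interp Fn Pr D} {π : D' → D}
    {args : List (EufTerm Fn Pr)} (h : ∀ T ∈ args, π (evalT I' T) = evalT I T) :
    (args.map (evalT I')).map π = args.map (evalT I) := by
  rw [List.map_map]
  exact List.map_congr_left h

theorem map_evalT_eq_iff_forall₂ {I : Interp Fn Pr D} {args₁ args₂ : List (EufTerm Fn Pr)} :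
    args₁.map (evalT I) = args₂.map (evalT I) ↔
      List.Forall₂ (fun T₁ T₂ => evalT I T₁ = evalT I T₂) args₁ args₂ := by
  rw [← List.forall₂_eq_eq_eq, List.forall₂_map_left_iff, List.forall₂_map_right_iff]

theorem evalT_app (I : Interp Fn Pr D) (f : Fn) (args : List (EufTerm Fn Pr)) :
    evalT I (.app f args) = I.fn f (args.map (evalT I)) := by
  rw [evalT, List.attach_map_val]

theorem evalF_papp (I : Interp Fn Pr D) (p : Pr) (args : List (EufTerm Fn Pr)) :
    evalF I (.papp p args) = I.pr p (args.map (evalT I)) := by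
  rw [evalF, List.attach_map_val]

end Evaluation

section Grammar

variable {Fn Pr : Type} {isP : Fn → Prop}

theorem isPTerm_app_iff {f : Fn} {args : List (EufTerm Fn Pr)} :
    IsPTerm isP (.app f args) ↔ ∀ T ∈ args, IsPTerm isP T :=
  ⟨fun
    | .g (.app _ h) => h
    | .app _ h => h,
  fun h => (em (isP f)).elim (.app · h) fun hf => .g (.app hf h)⟩

theorem isPTerm_ite_iff {G : EufFormula Fn Pr} {T₁ T₂ : EufTerm Fn Pr} :
    IsPTerm isP (.ite G T₁ T₂) ↔ IsGFormula isP G ∧ IsPTerm isP T₁ ∧ IsPTerm isP T₂ :=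
  ⟨fun
    | .g (.ite hG h₁ h₂) => ⟨hG, .g h₁, .g h₂⟩
    | .ite hG h₁ h₂ => ⟨hG, h₁, h₂⟩,
  fun ⟨hG, h₁, h₂⟩ => .ite hG h₁ h₂⟩

theorem isPFormula_not_iff {G : EufFormula Fn Pr} :
    IsPFormula isP (.not G) ↔ IsGFormula isP G :=
  ⟨fun (.g (.not h)) => h, fun h => .g (.not h)⟩

theorem isPFormula_and_iff {G₁ G₂ : EufFormula Fn Pr} :
    IsPFormula isP (.and G₁ G₂) ↔ IsPFormula isP G₁ ∧ IsPFormula isP G₂ :=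
  ⟨fun
    | .g (.and h₁ h₂) => ⟨.g h₁, .g h₂⟩
    | .and h₁ h₂ => ⟨h₁, h₂⟩,
  fun ⟨h₁, h₂⟩ => .and h₁ h₂⟩

theorem isPFormula_or_iff {G₁ G₂ : EufFormula Fn Pr} :
    IsPFormula isP (.or G₁ G₂) ↔ IsPFormula isP G₁ ∧ IsPFormula isP G₂ :=
  ⟨fun
    | .g (.or h₁ h₂) => ⟨.g h₁, .g h₂⟩
    | .or h₁ h₂ => ⟨h₁, h₂⟩,
  fun ⟨h₁, h₂⟩ => .or h₁ h₂⟩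

theorem isPFormula_eq_iff {T₁ T₂ : EufTerm Fn Pr} :
    IsPFormula isP (.eq T₁ T₂) ↔ IsPTerm isP T₁ ∧ IsPTerm isP T₂ :=
  ⟨fun
    | .g (.eq h₁ h₂) => ⟨.g h₁, .g h₂⟩
    | .eq h₁ h₂ => ⟨h₁, h₂⟩,
  fun ⟨h₁, h₂⟩ => .eq h₁ h₂⟩

theorem isPFormula_papp_iff {p : Pr} {args : List (EufTerm Fn Pr)} :
    IsPFormula isP (.papp p args) ↔ ∀ T ∈ args, IsPTerm isP T :=
  ⟨fun (.g (.papp h)) => h, fun h => .g (.papp h)⟩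

/-- The expressions of PEUF: p-terms and p-formulas. As these include the g-terms and g-formulas,
the class is closed under subexpressions. -/
def IsPExpr (isP : Fn → Prop) : EufExpr Fn Pr → Prop
  | .t T => IsPTerm isP T
  | .f G => IsPFormula isP G

theorem IsPExpr.of_immSub {a b : EufExpr Fn Pr} (hb : IsPExpr isP b) (h : ImmSub a b) :
    IsPExpr isP a := by
  cases h with
  | appArg hT => exact isPTerm_app_iff.1 hb _ hT
  | iteC => exact .g (isPTerm_ite_iff.1 hb).1
  | ite1 => exact (isPTerm_ite_iff.1 hb).2.1
  | ite2 => exact (isPTerm_ite_iff.1 hb).2.2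
  | not => exact .g (isPFormula_not_iff.1 hb)
  | andL => exact (isPFormula_and_iff.1 hb).1
  | andR => exact (isPFormula_and_iff.1 hb).2
  | orL => exact (isPFormula_or_iff.1 hb).1
  | orR => exact (isPFormula_or_iff.1 hb).2
  | eqL => exact (isPFormula_eq_iff.1 hb).1
  | eqR => exact (isPFormula_eq_iff.1 hb).2
  | pappArg hT => exact isPFormula_papp_iff.1 hb _ hT

theorem IsPExpr.of_subExpr {a b : EufExpr Fn Pr} (hb : IsPExpr isP b) (h : SubExpr a b) :
    IsPExpr isP a :=
  Relation.ReflTransGen.head_induction_on h hb fun hac _ hc => hc.of_immSub hac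

theorem IsPFormula.isPTerm_of_termInF {F : EufFormula Fn Pr} {T : EufTerm Fn Pr}
    (hF : IsPFormula isP F) (hT : TermInF T F) : IsPTerm isP T :=
  IsPExpr.of_subExpr (b := .f F) hF hT

end Grammar

namespace Interp

variable {Fn Pr D D' : Type}

/-- `I'` is a p-cover of `I` along `π : D' → D`: the map `π` is a homomorphism of interpretations
with section `ι`, and the g-function symbols (those not in `isP`) only take values in the range
of `ι`, on which `π` is injective. -/
structure IsPCover (isP : Fn → Prop) (I' : Interp Fn Pr D') (I : Interp Fn Pr D)
    (π : D' → D) (ι : D → D') : Prop where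
  leftInverse : Function.LeftInverse π ι
  map_fn : ∀ f, isP f → ∀ l, π (I'.fn f l) = I.fn f (l.map π)
  fn_eq : ∀ g, ¬ isP g → ∀ l, I'.fn g l = ι (I.fn g (l.map π))
  pr_eq : ∀ p l, I'.pr p l = I.pr p (l.map π)

namespace IsPCover

variable {isP : Fn → Prop} {I' : Interp Fn Pr D'} {I : Interp Fn Pr D} {π : D' → D} {ι : D → D'}

mutual

theorem evalT_of_isGTerm (hI : IsPCover isP I' I π ι) :
    ∀ {T : EufTerm Fn Pr}, IsGTerm isP T → evalT I' T = ι (evalT I T)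
  | _, .ite hG h₁ h₂ => by
    rw [evalT, evalT, hI.evalF_of_isGFormula hG, hI.evalT_of_isGTerm h₁, hI.evalT_of_isGTerm h₂,
      apply_ite ι]
  | _, .app hg hargs => by
    rw [evalT_app, evalT_app, hI.fn_eq _ hg,
      map_map_evalT fun T hT => hI.map_evalT_of_isPTerm (hargs T hT)]

theorem map_evalT_of_isPTerm (hI : IsPCover isP I' I π ι) :
    ∀ {T : EufTerm Fn Pr}, IsPTerm isP T → π (evalT I' T) = evalT I T
  | _, .g hT => by rw [hI.evalT_of_isGTerm hT, hI.leftInverse]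
  | _, .ite hG h₁ h₂ => by
    rw [evalT, evalT, hI.evalF_of_isGFormula hG, apply_ite π, hI.map_evalT_of_isPTerm h₁,
      hI.map_evalT_of_isPTerm h₂]
  | _, .app hf hargs => by
    rw [evalT_app, evalT_app, hI.map_fn _ hf,
      map_map_evalT fun T hT => hI.map_evalT_of_isPTerm (hargs T hT)]

theorem evalF_of_isGFormula (hI : IsPCover isP I' I π ι) :
    ∀ {G : EufFormula Fn Pr}, IsGFormula isP G → evalF I' G = evalF I G
  | _, .tt => by rw [evalF, evalF]
  | _, .ff => by rw [evalF, evalF]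
  | _, .not h => by rw [evalF, evalF, hI.evalF_of_isGFormula h]
  | _, .and h₁ h₂ => by
    rw [evalF, evalF, hI.evalF_of_isGFormula h₁, hI.evalF_of_isGFormula h₂]
  | _, .or h₁ h₂ => by
    rw [evalF, evalF, hI.evalF_of_isGFormula h₁, hI.evalF_of_isGFormula h₂]
  | _, .eq h₁ h₂ => by
    rw [evalF, evalF, hI.evalT_of_isGTerm h₁, hI.evalT_of_isGTerm h₂, decide_eq_decide]
    exact hI.leftInverse.injective.eq_iff
  | _, .papp hargs => by
    rw [evalF_papp, evalF_papp, hI.pr_eq,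
      map_map_evalT fun T hT => hI.map_evalT_of_isPTerm (hargs T hT)]

end

theorem evalT_eq_of_evalT_eq (hI : IsPCover isP I' I π ι) {T₁ T₂ : EufTerm Fn Pr}
    (h₁ : IsPTerm isP T₁) (h₂ : IsPTerm isP T₂) (h : evalT I' T₁ = evalT I' T₂) :
    evalT I T₁ = evalT I T₂ := by
  rw [← hI.map_evalT_of_isPTerm h₁, ← hI.map_evalT_of_isPTerm h₂, h]

theorem refinesOn (hI : IsPCover isP I' I π ι) {Ts : Set (EufTerm Fn Pr)}
    (hTs : ∀ T ∈ Ts, IsPTerm isP T) : RefinesOn I' I Ts :=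
  fun T₁ h₁ T₂ h₂ => hI.evalT_eq_of_evalT_eq (hTs T₁ h₁) (hTs T₂ h₂)

theorem evalF_of_isPFormula (hI : IsPCover isP I' I π ι) :
    ∀ {F : EufFormula Fn Pr}, IsPFormula isP F → evalF I' F = true → evalF I F = true
  | _, .g hG => (hI.evalF_of_isGFormula hG ▸ ·)
  | _, .and h₁ h₂ => by
    simp only [evalF, Bool.and_eq_true]
    exact And.imp (hI.evalF_of_isPFormula h₁) (hI.evalF_of_isPFormula h₂)
  | _, .or h₁ h₂ => by
    simp only [evalF, Bool.or_eq_true]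
    exact Or.imp (hI.evalF_of_isPFormula h₁) (hI.evalF_of_isPFormula h₂)
  | _, .eq h₁ h₂ => by
    simp only [evalF, decide_eq_true_eq]
    exact hI.evalT_eq_of_evalT_eq h₁ h₂

end IsPCover

/-- The map from the extended domain back to `D` which identifies the fresh element `none` with
the value of `f` at `a`. -/
def collapse (J : Interp Fn Pr D) (f : Fn) (a : List D) (d : Option D) : D :=
  d.getD (J.fn f a)

open Classical in
/-- The interpretation over `D` extended by a fresh element `none` which gives `f` the value `none`
at the argument list `a`, and agrees with `J` otherwise. Arguments are read through
`J.collapse f a`, so that `none` as an argument behaves like `J.fn f a`. -/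
noncomputable def splitOff (J : Interp Fn Pr D) (f : Fn) (a : List D) :
    Interp Fn Pr (Option D) where
  fn g l := if g = f ∧ l.map (J.collapse f a) = a then none
    else some (J.fn g (l.map (J.collapse f a)))
  pr p l := J.pr p (l.map (J.collapse f a))

variable {isP : Fn → Prop}

theorem splitOff_fn_eq_none_iff (J : Interp Fn Pr D) (f g : Fn) (a : List D)
    (l : List (Option D)) :
    (J.splitOff f a).fn g l = none ↔ g = f ∧ l.map (J.collapse f a) = a := by
  simp [splitOff]

theorem isPCover_splitOff (J : Interp Fn Pr D) {f : Fn} (hf : isP f) (a : List D) :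
    IsPCover isP (J.splitOff f a) J (J.collapse f a) some where
  leftInverse _ := rfl
  map_fn g _ l := by
    simp only [splitOff]
    split_ifs with h
    · rw [h.1, h.2]
      rfl
    · rfl
  fn_eq g hg l := if_neg fun ⟨hgf, _⟩ => hg (hgf ▸ hf)
  pr_eq _ _ := rfl

theorem evalT_splitOff_app_eq_none_iff (J : Interp Fn Pr D) {f g : Fn} (hf : isP f) (a : List D)
    {args : List (EufTerm Fn Pr)} (hargs : ∀ T ∈ args, IsPTerm isP T) :
    evalT (J.splitOff f a) (.app g args) = none ↔ g = f ∧ args.map (evalT J) = a := by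
  rw [evalT_app, splitOff_fn_eq_none_iff,
    map_map_evalT fun T hT => (J.isPCover_splitOff hf a).map_evalT_of_isPTerm (hargs T hT)]

theorem exists_forall₂_of_evalT_splitOff_eq (J : Interp Fn Pr D) {f : Fn} (hf : isP f)
    {args : List (EufTerm Fn Pr)} (hargs : ∀ A ∈ args, IsPTerm isP A)
    {T : EufTerm Fn Pr} (happ : IsAppTerm T) (hT : IsPTerm isP T)
    (heq : evalT (J.splitOff f (args.map (evalT J))) (.app f args) =
      evalT (J.splitOff f (args.map (evalT J))) T) :
    ∃ args₂, T = .app f args₂ ∧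
      List.Forall₂ (fun A B => evalT J A = evalT J B) args args₂ := by
  cases T with
  | ite => exact happ.elim
  | app g args₂ =>
    rw [(J.evalT_splitOff_app_eq_none_iff hf _ hargs).2 ⟨rfl, rfl⟩] at heq
    obtain ⟨rfl, hmap⟩ :=
      (J.evalT_splitOff_app_eq_none_iff hf _ (isPTerm_app_iff.1 hT)).1 heq.symm
    exact ⟨args₂, rfl, map_evalT_eq_iff_forall₂.1 hmap.symm⟩

end Interp

/-- If `J` is not maximally diverse for the p-formula `F`, then there is a
proper refinement `J'` of `J` for `𝒯(F)`, over the domain `D` extended by one fresh element,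
such that `J'[F] ⇒ J[F]`. -/
theorem refine_lemma {Fn Pr D : Type} [Nonempty D] (isP : Fn → Prop)
    (F : EufFormula Fn Pr) (hF : IsPFormula isP F) (J : Interp Fn Pr D)
    (hnd : ¬ MaxDiverse isP J F) :
    ∃ J' : Interp Fn Pr (Option D),
      ProperRefinesOn J' J (AppTermsF F) ∧
      (evalF J' F = true → evalF J F = true) := by
  obtain ⟨f, args, ⟨hf, -⟩, hmem, T, hT, heq, hne⟩ : ∃ f args, f ∈ PSymbolsIn isP F ∧
      TermInF (.app f args) F ∧ ∃ T ∈ AppTermsF F, evalT J (.app f args) = evalT J T ∧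
        ¬ ∃ args₂, T = .app f args₂ ∧
          List.Forall₂ (fun A B => evalT J A = evalT J B) args args₂ := by
    simpa only [MaxDiverse, DiverseFor, not_forall, exists_prop] using hnd
  have hcover := J.isPCover_splitOff hf (args.map (evalT J))
  have hargs := isPTerm_app_iff.1 (hF.isPTerm_of_termInF hmem)
  refine ⟨J.splitOff f (args.map (evalT J)), ⟨?_, ?_⟩, hcover.evalF_of_isPFormula hF⟩
  · exact hcover.refinesOn fun S hS => hF.isPTerm_of_termInF hS.2
  · exact ⟨.app f args, ⟨trivial, hmem⟩, T, hT, heq,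
      mt (J.exists_forall₂_of_evalT_splitOff_eq hf hargs hT.1 (hF.isPTerm_of_termInF hT.2)) hne⟩
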